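/- Let π : A → B(H) be a unital *-representation of a unital C*-algebra A and α : A → A a unital injective *-endomorphism. Then there exist a Hilbert space K, an isometry W : H → K, and a unital *-representation ρ : A → B(K) such that W*ρ(α(a))W = π(a) for all a ∈ A. -/

import Mathlib

set_option synthInstance.maxHeartbeats 1000000
set_option maxHeartbeats 1000000

open ContinuousLinearMap

universe u v

/-!
Decompose `π` into cyclic summands with cyclic vectors `ξ`. An injective `*`-homomorphism `α`
reflects positivity, so `α a ↦ ⟪ξ, π a ξ⟫` is a well-defined positive functional on the range
of `α`, and the M. Riesz extension theorem (the order-theoretic Hahn–Banach theorem) extends it to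
a positive functional `f` on the whole algebra. In the GNS representation of `f`, the subspace
generated from the cyclic vector by the range of `α` is a copy of the cyclic subspace of `ξ`, on
which `α a` acts as `π a`. Summing over `ξ` embeds `H` isometrically into the direct sum of the
GNS spaces.
-/

open scoped InnerProductSpace ComplexOrder ComplexStarModule

section PositiveExtension

lemma exists_positiveLinearMap_comp_eq {E F : Type*} [AddCommGroup E] [Module ℝ E]
    [AddCommGroup F] [PartialOrder F] [IsOrderedAddMonoid F] [Module ℝ F] [PosSMulMono ℝ F]
    (j : E →ₗ[ℝ] F) (cofinal : ∀ y, ∃ x, y ≤ j x)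
    (φ : E →ₗ[ℝ] ℝ) (hφ : ∀ x, 0 ≤ j x → 0 ≤ φ x) :
    ∃ g : F →ₚ[ℝ] ℝ, ∀ x, g (j x) = φ x := by
  have ker_le : j.ker ≤ φ.ker := fun x hx ↦ by
    rw [LinearMap.mem_ker] at hx ⊢
    exact le_antisymm (by simpa using hφ (-x) (by simp [hx])) (hφ x hx.ge)
  obtain ⟨ψ, hψ⟩ : ∃ ψ : Module.Dual ℝ F, ψ ∘ₗ j = φ := by
    change φ ∈ LinearMap.range j.dualMap
    rw [LinearMap.range_dualMap_eq_dualAnnihilator_ker]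
    exact (Submodule.mem_dualAnnihilator φ).mpr ker_le
  have hψj (x : E) : ψ (j x) = φ x := LinearMap.congr_fun hψ x
  obtain ⟨g, hgψ, hg⟩ := riesz_extension (PointedCone.positive ℝ F) (ψ.toPMap j.range)
    (by rintro ⟨_, x, rfl⟩ hx; simpa [hψj] using hφ x hx)
    (fun y ↦ by
      obtain ⟨x, hx⟩ := cofinal (-y)
      exact ⟨⟨j x, x, rfl⟩, neg_le_iff_add_nonneg.mp hx⟩)
  exact ⟨.mk₀ g hg, fun x ↦ (hgψ ⟨j x, x, rfl⟩).trans (hψj x)⟩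

/-- The complex-linear extension `a ↦ g (ℜ a) + i g (ℑ a)` of a positive functional on the
self-adjoint elements. -/
noncomputable def complexifyPositive {A : Type*} [NonUnitalRing A] [StarRing A] [PartialOrder A]
    [StarOrderedRing A] [Module ℂ A] [StarModule ℂ A] (g : selfAdjoint A →ₚ[ℝ] ℝ) : A →ₚ[ℂ] ℂ :=
  .mk₀ (Module.Dual.extendRCLike (g.toLinearMap ∘ₗ ℜ)) fun a ha ↦ by
    have ha_sa : IsSelfAdjoint a := .of_nonneg ha
    have : (0 : selfAdjoint A) ≤ ℜ a := by rwa [← Subtype.coe_le_coe, ha_sa.coe_realPart]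
    simpa [Module.Dual.extendRCLike_apply, ha_sa.imaginaryPart] using g.map_nonneg this

lemma complexifyPositive_apply {A : Type*} [NonUnitalRing A] [StarRing A] [PartialOrder A]
    [StarOrderedRing A] [Module ℂ A] [StarModule ℂ A] (g : selfAdjoint A →ₚ[ℝ] ℝ) (a : A) :
    complexifyPositive g a = g (ℜ a) + Complex.I * g (ℑ a) := by
  change Module.Dual.extendRCLike (𝕜 := ℂ) (g.toLinearMap ∘ₗ ℜ) a = _
  simp [Module.Dual.extendRCLike_apply]

instance posSMulMono_selfAdjoint {A : Type*} [AddCommGroup A] [StarAddMonoid A] [PartialOrder A]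
    [Module ℝ A] [StarModule ℝ A] [PosSMulMono ℝ A] : PosSMulMono ℝ (selfAdjoint A) where
  smul_le_smul_of_nonneg_left _ hc _ _ h := smul_le_smul_of_nonneg_left (α := ℝ) (β := A) h hc

lemma le_realPart_map_algebraMap_norm {A B : Type*} [Ring A] [Algebra ℂ A] [StarRing A]
    [CStarAlgebra B] [PartialOrder B] [StarOrderedRing B] (α : A →⋆ₐ[ℂ] B) (y : selfAdjoint B) :
    y ≤ ℜ (α (algebraMap ℝ A ‖y‖)) := by
  have map_eq : α (algebraMap ℝ A ‖y‖) = algebraMap ℝ B ‖y‖ :=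
    (α.toAlgHom.restrictScalars ℝ).commutes ‖y‖
  rw [map_eq, ← Subtype.coe_le_coe, ((IsSelfAdjoint.all ‖y‖).algebraMap B).coe_realPart]
  exact y.2.le_algebraMap_norm_self

variable {A B : Type*} [CStarAlgebra A] [PartialOrder A] [StarOrderedRing A]
  [CStarAlgebra B] [PartialOrder B] [StarOrderedRing B]

lemma map_nonneg_iff_of_injective (α : A →⋆ₐ[ℂ] B) (hα : Function.Injective α) {a : A} :
    0 ≤ α a ↔ 0 ≤ a := by
  refine ⟨fun h ↦ ?_, map_nonneg α⟩
  have ha : IsSelfAdjoint a := hα (by rw [map_star, (IsSelfAdjoint.of_nonneg h).star_eq])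
  rw [StarOrderedRing.nonneg_iff_spectrum_nonneg (R := ℝ) a, ← ha.map_spectrum_real α hα]
  exact (StarOrderedRing.nonneg_iff_spectrum_nonneg (R := ℝ) (α a)).mp h

theorem exists_positive_extension_of_injective (α : A →⋆ₐ[ℂ] B) (hα : Function.Injective α)
    (φ : A →ₚ[ℂ] ℂ) : ∃ f : B →ₚ[ℂ] ℂ, ∀ a, f (α a) = φ a := by
  have re_nonneg (a : A) (ha : 0 ≤ ℜ (α a)) : 0 ≤ (φ a).re := by
    have : (0 : B) ≤ α (ℜ a) := by rw [map_realPart]; exact ha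
    have : 0 ≤ φ (ℜ a) := φ.map_nonneg ((map_nonneg_iff_of_injective α hα).mp this)
    rwa [map_realPart, Complex.coe_realPart, Complex.zero_le_real] at this
  obtain ⟨g, hg⟩ := exists_positiveLinearMap_comp_eq
    (ℜ ∘ₗ α.toAlgHom.toLinearMap.restrictScalars ℝ)
    (fun y ↦ ⟨algebraMap ℝ A ‖y‖, le_realPart_map_algebraMap_norm α y⟩)
    (Complex.reLm ∘ₗ φ.toLinearMap.restrictScalars ℝ) re_nonneg
  have g_realPart (a : A) : g (ℜ (α a)) = (φ a).re := hg a
  have g_imaginaryPart (a : A) : g (ℑ (α a)) = (φ a).im := by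
    simpa using g_realPart (-Complex.I • a)
  refine ⟨complexifyPositive g, fun a ↦ ?_⟩
  rw [complexifyPositive_apply, g_realPart, g_imaginaryPart, mul_comm, Complex.re_add_im]

end PositiveExtension

section Representations

variable {𝕜 H K : Type*} [RCLike 𝕜] [NormedAddCommGroup H] [InnerProductSpace 𝕜 H]
  [NormedAddCommGroup K] [InnerProductSpace 𝕜 K] [CompleteSpace K]

lemma exists_linearIsometry_of_inner_eq {ι : Type*} {x : ι → H} {y : ι → K}
    (inner_eq : ∀ i j, ⟪x i, x j⟫_𝕜 = ⟪y i, y j⟫_𝕜)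
    (dense : Dense (Submodule.span 𝕜 (Set.range x) : Set H)) :
    ∃ W : H →ₗᵢ[𝕜] K, ∀ i, W (x i) = y i := by
  let X := Finsupp.linearCombination 𝕜 x
  let Y := Finsupp.linearCombination 𝕜 y
  have norm_eq (c : ι →₀ 𝕜) : ‖Y c‖ = ‖X c‖ := by
    simp only [@norm_eq_sqrt_re_inner 𝕜, X, Y, Finsupp.linearCombination_apply, Finsupp.sum_inner,
      Finsupp.inner_sum, inner_smul_left, inner_smul_right, inner_eq]
  have denseRange : DenseRange X := by
    rwa [← Finsupp.range_linearCombination, LinearMap.coe_range] at dense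
  have extend_apply (c : ι →₀ 𝕜) : Y.extendOfNorm X (X c) = Y c :=
    LinearMap.extendOfNorm_eq denseRange ⟨1, fun c ↦ by rw [norm_eq, one_mul]⟩ c
  refine ⟨⟨Y.extendOfNorm X, fun z ↦ ?_⟩, fun i ↦ ?_⟩
  · refine denseRange.induction (P := fun z ↦ ‖Y.extendOfNorm X z‖ = ‖z‖) ?_
      (isClosed_eq (by fun_prop) (by fun_prop)) z
    rintro _ ⟨c, rfl⟩
    rw [extend_apply, norm_eq]
  · simpa [X, Y] using extend_apply (Finsupp.single i 1)

variable [CompleteSpace H] {A : Type*} [Semiring A] [Algebra 𝕜 A] [Star A]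
  (π : A →⋆ₐ[𝕜] (H →L[𝕜] H))

/-- Orthogonality of the cyclic subspaces generated by `x` and `y`, the relation between the
generators of distinct summands of a decomposition of `π`. Because `π A` is closed under adjoints,
this may be expressed by moving all operators to one side. -/
def CyclicOrthogonal (x y : H) : Prop := ∀ a, ⟪x, π a y⟫_𝕜 = 0

/-- A family of vectors is cyclic for `π` if no proper closed invariant subspace contains it, that
is, if its orbits under `π` span a dense subspace. A decomposition of `π` into cyclic summands is a
pairwise `CyclicOrthogonal` such family. -/
def IsCyclicFamily {ι : Type*} (ξ : ι → H) : Prop :=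
  Dense (Submodule.span 𝕜 (Set.range fun p : A × ι ↦ π p.1 (ξ p.2)) : Set H)

variable {π}

lemma inner_starAlgHom_apply_left (a : A) (x y : H) : ⟪π a x, y⟫_𝕜 = ⟪x, π (star a) y⟫_𝕜 := by
  rw [map_star, star_eq_adjoint, adjoint_inner_right]

lemma inner_starAlgHom_apply_apply (a b : A) (x y : H) :
    ⟪π a x, π b y⟫_𝕜 = ⟪x, π (star a * b) y⟫_𝕜 := by
  rw [inner_starAlgHom_apply_left, map_mul, mul_apply_eq_comp]

lemma CyclicOrthogonal.symm {x y : H} (h : CyclicOrthogonal π x y) : CyclicOrthogonal π y x :=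
  fun a ↦ by rw [inner_eq_zero_symm, inner_starAlgHom_apply_left, h]

lemma CyclicOrthogonal.eq_zero {x : H} (h : CyclicOrthogonal π x x) : x = 0 := by
  simpa using h 1

variable (π) in
theorem exists_pairwise_cyclicOrthogonal_isCyclicFamily :
    ∃ S : Set H, S.Pairwise (CyclicOrthogonal π) ∧ IsCyclicFamily π ((↑) : S → H) := by
  obtain ⟨S, maximal⟩ := zorn_subset {S : Set H | S.Pairwise (CyclicOrthogonal π)}
    fun c hc chain ↦ ⟨⋃₀ c, chain.pairwise_sUnion.mpr hc, fun _ ↦ Set.subset_sUnion_of_mem⟩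
  refine ⟨S, maximal.prop, ?_⟩
  rw [IsCyclicFamily, Submodule.dense_iff_topologicalClosure_eq_top,
    Submodule.topologicalClosure_eq_top_iff, Submodule.eq_bot_iff]
  intro v hv
  have orthogonal (x : H) (hx : x ∈ S) : CyclicOrthogonal π v x := fun a ↦
    Submodule.inner_left_of_mem_orthogonal
      (Submodule.subset_span (Set.mem_range_self (a, (⟨x, hx⟩ : S)))) hv
  have insert_pairwise : (insert v S).Pairwise (CyclicOrthogonal π) :=
    maximal.prop.insert fun x hx _ ↦ ⟨orthogonal x hx, (orthogonal x hx).symm⟩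
  have mem : v ∈ S := maximal.mem_of_prop_insert insert_pairwise
  exact (orthogonal v mem).eq_zero

theorem exists_linearIsometry_intertwining {σ : A →⋆ₐ[𝕜] (K →L[𝕜] K)} {ι : Type*}
    {ξ : ι → H} {η : ι → K} (cyclic : IsCyclicFamily π ξ)
    (inner_eq : ∀ a i j, ⟪ξ i, π a (ξ j)⟫_𝕜 = ⟪η i, σ a (η j)⟫_𝕜) :
    ∃ W : H →ₗᵢ[𝕜] K, ∀ a x, W (π a x) = σ a (W x) := by
  obtain ⟨W, hW⟩ := exists_linearIsometry_of_inner_eq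
    (y := fun p : A × ι ↦ σ p.1 (η p.2))
    (fun p q ↦ by rw [inner_starAlgHom_apply_apply, inner_starAlgHom_apply_apply, inner_eq]) cyclic
  refine ⟨W, fun a ↦ DFunLike.congr_fun (ContinuousLinearMap.ext_on
    (f := W.toContinuousLinearMap ∘L π a) (g := σ a ∘L W.toContinuousLinearMap) cyclic ?_)⟩
  rintro _ ⟨⟨b, i⟩, rfl⟩
  simpa [hW (b, i)] using hW (a * b, i)

end Representations

section DirectSum

variable {A ι : Type*} [CStarAlgebra A] {G : ι → Type*} [∀ i, NormedAddCommGroup (G i)]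
  [∀ i, InnerProductSpace ℂ (G i)] [∀ i, CompleteSpace (G i)]

/-- The Hilbert space direct sum of a family of representations of a C⋆-algebra, used to assemble
the GNS representations attached to the cyclic summands. -/
noncomputable def lpDirectSum (ρ : ∀ i, A →⋆ₐ[ℂ] (G i →L[ℂ] G i)) :
    A →⋆ₐ[ℂ] (lp G 2 →L[ℂ] lp G 2) where
  toFun a := lp.mapCLM 2 (fun i ↦ ρ i a) (norm_nonneg a)
    fun i ↦ NonUnitalStarAlgHom.norm_apply_le (ρ i) a
  map_one' := by ext; simp
  map_mul' a b := by ext; simp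
  map_zero' := by ext; simp
  map_add' a b := by ext; simp
  commutes' r := by ext; simp [Algebra.algebraMap_eq_smul_one]
  map_star' a := by
    rw [star_eq_adjoint, eq_adjoint_iff]
    intro x y
    simp [lp.inner_eq_tsum, map_star, star_eq_adjoint, adjoint_inner_left]

lemma lpDirectSum_apply (ρ : ∀ i, A →⋆ₐ[ℂ] (G i →L[ℂ] G i)) (a : A) (v : lp G 2) (i : ι) :
    lpDirectSum ρ a v i = ρ i a (v i) := rfl

lemma inner_single_lpDirectSum_single_self [DecidableEq ι] (ρ : ∀ i, A →⋆ₐ[ℂ] (G i →L[ℂ] G i))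
    (a : A) (i : ι) (v w : G i) :
    ⟪lp.single 2 i v, lpDirectSum ρ a (lp.single 2 i w)⟫_ℂ = ⟪v, ρ i a w⟫_ℂ := by
  rw [lp.inner_single_left, lpDirectSum_apply, lp.single_apply_self]

lemma inner_single_lpDirectSum_single_of_ne [DecidableEq ι] (ρ : ∀ i, A →⋆ₐ[ℂ] (G i →L[ℂ] G i))
    (a : A) {i j : ι} (hij : i ≠ j) (v : G i) (w : G j) :
    ⟪lp.single 2 i v, lpDirectSum ρ a (lp.single 2 j w)⟫_ℂ = 0 := by
  rw [lp.inner_single_left, lpDirectSum_apply, lp.single_apply_ne _ _ _ hij, map_zero,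
    inner_zero_right]

end DirectSum

section VectorFunctionals

/-- The positive functional `T ↦ ⟪ξ, T ξ⟫` of a vector `ξ`, not normalized to be a state. -/
noncomputable def vectorFunctional {𝕜 H : Type*} [RCLike 𝕜] [NormedAddCommGroup H]
    [InnerProductSpace 𝕜 H] (ξ : H) : (H →L[𝕜] H) →ₚ[𝕜] 𝕜 :=
  ⟨innerₛₗ 𝕜 ξ ∘ₗ (ContinuousLinearMap.apply 𝕜 H ξ).toLinearMap, fun S T h ↦ by
    simpa [inner_sub_right] using ((le_def S T).mp h).inner_nonneg_right ξ⟩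

variable {A : Type*} [CStarAlgebra A] [PartialOrder A] [StarOrderedRing A]

/-- The canonical cyclic vector of the GNS representation, the class of the unit, through which
`f` is recovered as a vector functional. -/
noncomputable def gnsVector (f : A →ₚ[ℂ] ℂ) : f.GNS := (f.toPreGNS 1 : f.PreGNS)

lemma inner_gnsVector_gnsStarAlgHom (f : A →ₚ[ℂ] ℂ) (a : A) :
    ⟪gnsVector f, f.gnsStarAlgHom a (gnsVector f)⟫_ℂ = f a := by
  simp [gnsVector, PositiveLinearMap.preGNS_inner_def]

end VectorFunctionals

theorem exists_extension_general {A : Type*} [CStarAlgebra A] {B : Type u} [CStarAlgebra B]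
    {H : Type v} [NormedAddCommGroup H] [InnerProductSpace ℂ H] [CompleteSpace H]
    (α : A →⋆ₐ[ℂ] B) (hα : Function.Injective α) (π : A →⋆ₐ[ℂ] (H →L[ℂ] H)) :
    ∃ (K : Type (max u v)) (_ : NormedAddCommGroup K) (_ : InnerProductSpace ℂ K)
      (_ : CompleteSpace K) (ρ : B →⋆ₐ[ℂ] (K →L[ℂ] K)) (W : H →L[ℂ] K),
      adjoint W ∘L W = 1 ∧ ∀ a : A, ρ (α a) ∘L W = W ∘L π a := by
  classical
  let _ := CStarAlgebra.spectralOrder A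
  let _ := CStarAlgebra.spectralOrder B
  have := CStarAlgebra.spectralOrderedRing A
  have := CStarAlgebra.spectralOrderedRing B
  obtain ⟨S, orthogonal, cyclic⟩ := exists_pairwise_cyclicOrthogonal_isCyclicFamily π
  have exists_functional (ξ : S) : ∃ f : B →ₚ[ℂ] ℂ, ∀ a, f (α a) = ⟪(ξ : H), π a ξ⟫_ℂ :=
    exists_positive_extension_of_injective α hα ((vectorFunctional (ξ : H)).comp (.ofClass π))
  choose f hf using exists_functional
  let ρ := lpDirectSum fun ξ ↦ (f ξ).gnsStarAlgHom
  have inner_eq (a : A) (ξ ζ : S) : ⟪(ξ : H), π a ζ⟫_ℂ =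
      ⟪lp.single 2 ξ (gnsVector (f ξ)), ρ (α a) (lp.single 2 ζ (gnsVector (f ζ)))⟫_ℂ := by
    obtain rfl | hne := eq_or_ne ξ ζ
    · rw [inner_single_lpDirectSum_single_self, inner_gnsVector_gnsStarAlgHom, hf]
    · rw [inner_single_lpDirectSum_single_of_ne _ _ hne]
      exact orthogonal ξ.2 ζ.2 (Subtype.coe_ne_coe.mpr hne) a
  obtain ⟨W, hW⟩ := exists_linearIsometry_intertwining (σ := ρ.comp α) cyclic inner_eq
  exact ⟨_, inferInstance, inferInstance, inferInstance, ρ, W.toContinuousLinearMap,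
    (norm_map_iff_adjoint_comp_self _).mp W.norm_map, fun a ↦ ext fun x ↦ (hW a x).symm⟩

/-- **Lemma HB.** Given a unital `*`-representation `π : A → B(H)` and
a unital injective `*`-endomorphism `α` of `A`, there exist a Hilbert space `K`, an
isometry `W : H → K` and a unital `*`-representation `ρ : A → B(K)` such that
`W* ρ(α a) W = π a` for all `a ∈ A`. -/
theorem exists_extension
    {A : Type u} [CStarAlgebra A]
    {H : Type v} [NormedAddCommGroup H] [InnerProductSpace ℂ H] [CompleteSpace H]
    (α : A →⋆ₐ[ℂ] A) (hα : Function.Injective α) (hαone : α 1 = 1)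
    (π : A →⋆ₐ[ℂ] (H →L[ℂ] H)) :
    ∃ (K : Type (max u v)) (_ : NormedAddCommGroup K) (_ : InnerProductSpace ℂ K)
      (_ : CompleteSpace K) (ρ : A →⋆ₐ[ℂ] (K →L[ℂ] K)) (W : H →L[ℂ] K),
      adjoint W ∘L W = 1 ∧ ∀ a : A, adjoint W ∘L ρ (α a) ∘L W = π a := by
  obtain ⟨K, _, _, _, ρ, W, hW, intertwining⟩ := exists_extension_general α hα π
  exact ⟨K, _, _, _, ρ, W, hW, fun a ↦ by rw [intertwining, ← comp_assoc, hW]; rfl⟩
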